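/- For every prime power q, C_{6,4}(q) = q^18 − 9q^17 + 25q^16 − 16q^15 − 58q^14 − 32q^13 − 10q^12 + 82q^11 + 73q^10 + 41q^9 − 15q^8 − 66q^7 − 16q^6 + 40·A_6(4,q), where A_6(4,q) is the number of strong realizations in P^3(F_q) of the hyperfiguration on 6 points. -/

import Mathlib

open scoped LinearAlgebra.Projectivization

/-- Three points of `ℙ³(F_q)` are collinear if vector representatives of them span a
subspace of `F_q^4` of dimension at most 2. -/
def Collinear3 (F : Type) [Field F] (x y z : ℙ F (Fin 4 → F)) : Prop :=
  Module.finrank F ↥(x.submodule ⊔ y.submodule ⊔ z.submodule) ≤ 2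

/-- Four points of `ℙ³(F_q)` are coplanar if vector representatives of them span a
subspace of `F_q^4` of dimension at most 3. -/
def Coplanar4 (F : Type) [Field F] (x y z w : ℙ F (Fin 4 → F)) : Prop :=
  Module.finrank F ↥(x.submodule ⊔ y.submodule ⊔ z.submodule ⊔ w.submodule) ≤ 3

/-- A strong realization in `ℙ³(F_q)` of the hyperfiguration on 6 points: an injective
`σ : {0,…,5} → ℙ³(F_q)` such that a triple of image points is collinear iff its index set
is contained in `{0,1,2}` or `{3,4,5}`, and four image points are coplanar iff their index
set is one of the six listed planes. `A_6(4,q)` is the number of such maps. -/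
def IsHyp6Real (F : Type) [Field F] (σ : Fin 6 → ℙ F (Fin 4 → F)) : Prop :=
  Function.Injective σ ∧
    (∀ a b c : Fin 6, a ≠ b → a ≠ c → b ≠ c →
      (Collinear3 F (σ a) (σ b) (σ c) ↔
        ({a, b, c} : Finset (Fin 6)) ⊆ {0, 1, 2} ∨
          ({a, b, c} : Finset (Fin 6)) ⊆ {3, 4, 5})) ∧
    (∀ a b c d : Fin 6, a ≠ b → a ≠ c → a ≠ d → b ≠ c → b ≠ d → c ≠ d →
      (Coplanar4 F (σ a) (σ b) (σ c) (σ d) ↔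
        ({a, b, c, d} : Finset (Fin 6)) ∈
          ({{0, 1, 2, 3}, {0, 1, 2, 4}, {0, 1, 2, 5}, {0, 3, 4, 5}, {1, 3, 4, 5},
            {2, 3, 4, 5}} : Finset (Finset (Fin 6)))))

/-- An ordered `n`-arc in `ℙ³(F_q)`. -/
def IsArc4 (F : Type) [Field F] {n : ℕ} (σ : Fin n → ℙ F (Fin 4 → F)) : Prop :=
  Function.Injective σ ∧
    ∀ a b c d : Fin n, a ≠ b → a ≠ c → a ≠ d → b ≠ c → b ≠ d → c ≠ d →
      ¬ Coplanar4 F (σ a) (σ b) (σ c) (σ d)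

/-! The engine is Gale duality. Let `A` and `B` be matrices whose columns form bases of mutually
annihilating subspaces of `F ^ (n + 2)`, of dimensions `n` and `2`. The rows of `A` off a pair
`{x, y}` are linearly independent iff the rows `x` and `y` of `B` are. Hence six points of `ℙ³` in
general position correspond to six distinct points of `ℙ¹`, and a realization of the
hyperfiguration corresponds to two distinct points of `ℙ¹` repeated three times each. Each family
of rows in `F ^ n` has `|GL₂|` duals, each family in `F ^ 2` has `|GLₙ|`, and points have equally
many representatives on both sides, so counting dual pairs in two ways gives
`C_{6,4} |GL₂| = (q + 1) q (q - 1) (q - 2) (q - 3) (q - 4) |GL₄|` and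
`A_6 |GL₂| = (q + 1) q |GL₄|`. -/

open scoped Matrix MatrixGroups

lemma card_mul_eq_card_mul_of_rel {α β : Type*} [Finite α] [Finite β] {P : α → Prop}
    {Q : β → Prop} {k l : ℕ} (r : α → β → Prop) (hr : ∀ a b, r a b → (P a ↔ Q b))
    (hk : ∀ a, P a → Nat.card {b // r a b} = k) (hl : ∀ b, Q b → Nat.card {a // r a b} = l) :
    Nat.card {a // P a} * k = Nat.card {b // Q b} * l := by
  have := Fintype.ofFinite {a // P a}
  have := Fintype.ofFinite {b // Q b}
  let swap : (Σ a : {a // P a}, {b // r a b}) ≃ Σ b : {b // Q b}, {a // r a b} :=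
    { toFun := fun p => ⟨⟨p.2, (hr _ _ p.2.2).1 p.1.2⟩, p.1, p.2.2⟩
      invFun := fun p => ⟨⟨p.2, (hr _ _ p.2.2).2 p.1.2⟩, p.1, p.2.2⟩
      left_inv := fun _ => rfl
      right_inv := fun _ => rfl }
  have hcard := Nat.card_congr swap
  simpa only [Nat.card_sigma, hk _ (Subtype.property _), hl _ (Subtype.property _),
    Finset.sum_const, Finset.card_univ, smul_eq_mul, Nat.card_eq_fintype_card] using hcard

lemma linearIndependent_col_of_linearIndepOn_row {F κ : Type*} [Field F] [Finite κ] {n : ℕ}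
    {A : Matrix κ (Fin n) F} {s : Set κ} (hs : LinearIndepOn F A.row s) (hcard : n ≤ s.ncard) :
    LinearIndependent F A.col := by
  have := Fintype.ofFinite κ
  classical
  rw [linearIndependent_iff_card_le_finrank_span, Fintype.card_fin]
  calc n ≤ s.ncard := hcard
    _ = Module.finrank F (Submodule.span F (A.row '' s)) := by
        rw [Set.image_eq_range, finrank_span_eq_card hs, ← Nat.card_eq_fintype_card,
          Nat.card_coe_set_eq]
    _ ≤ Module.finrank F (Submodule.span F (Set.range A.row)) :=
        Submodule.finrank_mono (Submodule.span_mono (Set.image_subset_range _ _))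
    _ = Module.finrank F (Submodule.span F (Set.range A.col)) := by
        rw [← Matrix.rank_eq_finrank_span_row, Matrix.rank_eq_finrank_span_cols]

section Exchange

variable {K V κ : Type*} [Field K] [AddCommGroup V] [Module K V]

lemma exists_notMem_linearIndepOn_insert {w : κ → V} {s t : Finset κ}
    (hs : LinearIndepOn K w (s : Set κ)) (ht : LinearIndepOn K w (t : Set κ))
    (hst : s.card < t.card) : ∃ j ∉ s, LinearIndepOn K w (insert j (s : Set κ)) := by
  have finrank_span (u : Finset κ) (hu : LinearIndepOn K w (u : Set κ)) :
      Module.finrank K (Submodule.span K (w '' u)) = u.card := by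
    rw [Set.image_eq_range]
    exact (finrank_span_eq_card hu).trans (Fintype.card_coe u)
  by_contra! hdep
  have hspan : Submodule.span K (w '' t) ≤ Submodule.span K (w '' s) := by
    rw [Submodule.span_le, Set.image_subset_iff]
    intro j _
    by_cases hj : j ∈ s
    · exact Submodule.subset_span (Set.mem_image_of_mem w hj)
    · by_contra hw
      exact hdep j hj (hs.insert hw)
  have := FiniteDimensional.span_of_finite K (s.finite_toSet.image w)
  have hle := Submodule.finrank_mono hspan
  rw [finrank_span s hs, finrank_span t ht] at hle
  lia

lemma linearIndepOn_rep_iff_card_le_finrank (p : κ → ℙ K V) (s : Finset κ) :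
    LinearIndepOn K (fun i => (p i).rep) (s : Set κ) ↔
      s.card ≤ Module.finrank K ↥(⨆ i ∈ s, (p i).submodule) := by
  have hspan : ⨆ i ∈ s, (p i).submodule =
      Submodule.span K (Set.range fun i : (s : Set κ) => (p i).rep) := by
    simp only [Submodule.span_range_eq_iSup, ← Projectivization.submodule_eq, iSup_subtype,
      Finset.mem_coe]
  rw [hspan, ← Fintype.card_coe s]
  exact linearIndependent_iff_card_le_finrank_span

end Exchange

section GaleDuality

variable {F : Type*} [Field F] {κ : Type*} [Fintype κ] {m n : ℕ}

lemma finrank_ker_mulVecLin_transpose {A : Matrix κ (Fin n) F} (hA : LinearIndependent F A.col)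
    (hcard : Fintype.card κ = n + m) :
    Module.finrank F (LinearMap.ker Aᵀ.mulVecLin) = m := by
  classical
  have hrank : Module.finrank F (LinearMap.range Aᵀ.mulVecLin) = n := by
    simpa [← Matrix.rank_transpose A, Matrix.rank] using LinearIndependent.rank_matrix hA
  have := Aᵀ.mulVecLin.finrank_range_add_finrank_ker
  rw [Module.finrank_fintype_fun_eq_card] at this
  lia

lemma linearIndepOn_compl_iff_vecMul {A : Matrix κ (Fin n) F} {s : Set κ} :
    LinearIndepOn F A.row sᶜ ↔ ∀ z : κ → F, z ᵥ* A = 0 → (∀ x ∈ s, z x = 0) → z = 0 := by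
  rw [linearIndepOn_iff]
  refine (Finsupp.linearEquivFunOnFinite F F κ).toEquiv.forall_congr fun l => ?_
  have hcomb : Finsupp.linearCombination F A.row l = (⇑l) ᵥ* A := by
    rw [Matrix.vecMul_eq_sum]
    exact (Finsupp.linearCombination_apply F l).trans (Finsupp.sum_fintype _ _ (by simp))
  simp only [Finsupp.mem_supported', hcomb, Set.mem_compl_iff, not_not]
  exact ⟨fun h hA hs => DFunLike.coe_fn_eq.2 (h hs hA), fun h hs hA =>
    DFunLike.coe_injective (h hA hs)⟩

/-- `A` and `B` are Gale dual: their columns are bases of subspaces of `κ → F` annihilating each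
other. The vector configurations that are dual to each other are the families of rows. When
`Fintype.card κ = n + m`, each subspace is the full annihilator of the other. -/
structure IsGaleDual (A : Matrix κ (Fin n) F) (B : Matrix κ (Fin m) F) : Prop where
  left_col : LinearIndependent F A.col
  right_col : LinearIndependent F B.col
  transpose_mul : Aᵀ * B = 0

namespace IsGaleDual

variable {A : Matrix κ (Fin n) F} {B : Matrix κ (Fin m) F}

lemma symm (h : IsGaleDual A B) : IsGaleDual B A :=
  ⟨h.right_col, h.left_col, by simpa using congrArg Matrix.transpose h.transpose_mul⟩

lemma range_mulVecLin_eq_ker (h : IsGaleDual A B) (hcard : Fintype.card κ = n + m) :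
    LinearMap.range B.mulVecLin = LinearMap.ker Aᵀ.mulVecLin := by
  refine Submodule.eq_of_le_of_finrank_eq ?_ ?_
  · rw [LinearMap.range_le_ker_iff, ← Matrix.mulVecLin_mul, h.transpose_mul,
      Matrix.mulVecLin_zero]
  · rw [finrank_ker_mulVecLin_transpose h.left_col hcard]
    exact LinearMap.finrank_range_of_inj (Matrix.mulVec_injective_iff.2 h.right_col) |>.trans
      (by simp)

lemma vecMul_eq_zero_iff (h : IsGaleDual A B) (hcard : Fintype.card κ = n + m) (z : κ → F) :
    z ᵥ* A = 0 ↔ ∃ y, B *ᵥ y = z := by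
  rw [← Matrix.mulVec_transpose]
  exact (SetLike.ext_iff.1 (h.range_mulVecLin_eq_ker hcard) z).symm

theorem linearIndepOn_compl_range_iff (h : IsGaleDual A B) (hcard : Fintype.card κ = n + m)
    (f : Fin m → κ) :
    LinearIndepOn F A.row (Set.range f)ᶜ ↔ LinearIndependent F (B.row ∘ f) := by
  have hB : Function.Injective B.mulVec := Matrix.mulVec_injective_iff.2 h.right_col
  calc LinearIndepOn F A.row (Set.range f)ᶜ
      ↔ ∀ y, (∀ i, (B *ᵥ y) (f i) = 0) → y = 0 := by
        simp only [linearIndepOn_compl_iff_vecMul, h.vecMul_eq_zero_iff hcard, Set.forall_mem_range,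
          forall_exists_index, forall_apply_eq_imp_iff]
        exact forall₂_congr fun y _ => ⟨fun hy => hB (by simpa using hy), fun hy => by simp [hy]⟩
    _ ↔ Function.Injective (B.submatrix f id).mulVecLin := by
        simp only [injective_iff_map_eq_zero, funext_iff]
        rfl
    _ ↔ LinearIndependent F (B.row ∘ f) := by
        rw [Matrix.coe_mulVecLin, Matrix.mulVec_injective_iff_isUnit,
          ← Matrix.linearIndependent_rows_iff_isUnit]
        rfl

end IsGaleDual

lemma card_isGaleDual [Finite F] {A : Matrix κ (Fin n) F} (hA : LinearIndependent F A.col)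
    (hcard : Fintype.card κ = n + m) :
    Nat.card {B : Matrix κ (Fin m) F // IsGaleDual A B} = Nat.card (GL (Fin m) F) := by
  have := Fintype.ofFinite F
  let ker := LinearMap.ker Aᵀ.mulVecLin
  have hker : Module.finrank F ker = m := finrank_ker_mulVecLin_transpose hA hcard
  have e : {B : Matrix κ (Fin m) F // IsGaleDual A B} ≃
      {v : Fin m → ker // LinearIndependent F v} :=
    { toFun := fun B => ⟨fun j => ⟨B.1.col j,
          funext fun i => congrFun (congrFun B.2.transpose_mul i) j⟩,
        .of_comp ker.subtype B.2.right_col⟩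
      invFun := fun v => ⟨Matrix.of fun x j => (v.1 j : κ → F) x, hA,
        v.2.map' ker.subtype ker.ker_subtype,
        Matrix.ext fun i j => congrFun (v.1 j).2 i⟩
      left_inv := fun _ => rfl
      right_inv := fun _ => rfl }
  rw [Nat.card_congr e, card_linearIndependent hker.ge, Matrix.card_GL_field, hker]

end GaleDuality

section Scaling

variable {K V κ : Type*} [Field K] [AddCommGroup V] [Module K V]

lemma card_families_eq_card_points_mul [Fintype κ] (P : (κ → V) → Prop)
    (hne : ∀ w, P w → ∀ x, w x ≠ 0)
    (hsmul : ∀ (u : κ → Kˣ) w, P (fun x => u x • w x) ↔ P w) :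
    Nat.card {w // P w} =
      Nat.card {σ : κ → ℙ K V // P (fun x => (σ x).rep)} * Nat.card Kˣ ^ Fintype.card κ := by
  have hrep (w : κ → {v : V // v ≠ 0}) :
      P (fun x => w x) ↔ P (fun x => (Projectivization.mk K (w x : V) (w x).2).rep) := by
    choose u hu using fun x => Projectivization.exists_smul_eq_mk_rep K (w x : V) (w x).2
    simpa only [hu] using (hsmul u fun x => w x).symm
  let nonzeroLift : {w // P w} ≃ {w : κ → {v : V // v ≠ 0} // P fun x => w x} :=
    { toFun := fun w => ⟨fun x => ⟨w.1 x, hne w.1 w.2 x⟩, w.2⟩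
      invFun := fun w => ⟨fun x => w.1 x, w.2⟩
      left_inv := fun _ => rfl
      right_inv := fun _ => rfl }
  let split : (κ → {v : V // v ≠ 0}) ≃ (κ → ℙ K V) × (κ → Kˣ) :=
    (Equiv.piCongrRight fun _ => Projectivization.nonZeroEquivProjectivizationProdUnits K V).trans
      (Equiv.arrowProdEquivProdArrow _ _ _)
  rw [Nat.card_congr (nonzeroLift.trans ((split.subtypeEquiv hrep).trans
    (Equiv.prodSubtypeFstEquivSubtypeProd (p := fun σ : κ → ℙ K V => P fun x => (σ x).rep)))),
    Nat.card_prod, Nat.card_fun, Nat.card_eq_fintype_card (α := κ)]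

end Scaling

section Classes

variable {F : Type*} [Field F] {κ C : Type*} {n : ℕ}

/-- The partition of the vectors `g x` into parallel classes is the partition of the indices into
the fibres of `c`. Taking linear independence as the criterion makes every `g x` nonzero once `c`
takes two values. -/
def HasParallelClasses (F : Type*) [Field F] {V : Type*} [AddCommGroup V] [Module F V]
    (c : κ → C) (g : κ → V) : Prop :=
  ∀ x y, LinearIndependent F ![g x, g y] ↔ c x ≠ c y

/-- The Gale dual of `HasParallelClasses`: the vectors off `{x, y}` are independent exactly when
`x` and `y` lie in different classes of `c`. The case `x = y` is included, so the vectors off a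
single index are always dependent. -/
def HasCoparallelClasses (F : Type*) [Field F] {V : Type*} [AddCommGroup V] [Module F V]
    (c : κ → C) (w : κ → V) : Prop :=
  ∀ x y, LinearIndepOn F w {x, y}ᶜ ↔ c x ≠ c y

lemma IsGaleDual.hasCoparallelClasses_iff [Fintype κ] {A : Matrix κ (Fin n) F}
    {B : Matrix κ (Fin 2) F} (h : IsGaleDual A B) (hcard : Fintype.card κ = n + 2) (c : κ → C) :
    HasCoparallelClasses F c A.row ↔ HasParallelClasses F c B.row := by
  refine forall₂_congr fun x y => ?_
  have := h.linearIndepOn_compl_range_iff hcard ![x, y]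
  rw [Matrix.range_cons_cons_empty] at this
  rw [this, show B.row ∘ ![x, y] = ![B.row x, B.row y] by funext i; fin_cases i <;> rfl]

lemma HasCoparallelClasses.ne_zero {V : Type*} [AddCommGroup V] [Module F V] {c : κ → C}
    {w : κ → V} (h : HasCoparallelClasses F c w)
    (hc : ∀ x, ∃ y z, y ≠ x ∧ z ≠ x ∧ c y ≠ c z) (x : κ) : w x ≠ 0 := by
  obtain ⟨y, z, hyx, hzx, hyz⟩ := hc x
  exact ((h y z).2 hyz).ne_zero (by simp [hyx.symm, hzx.symm])

lemma HasCoparallelClasses.linearIndependent_col [Fintype κ] {A : Matrix κ (Fin n) F} {c : κ → C}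
    (h : HasCoparallelClasses F c A.row) (hcard : Fintype.card κ = n + 2) {x y : κ}
    (hxy : c x ≠ c y) : LinearIndependent F A.col := by
  refine linearIndependent_col_of_linearIndepOn_row ((h x y).2 hxy) ?_
  rw [Set.ncard_compl, Nat.card_eq_fintype_card, Set.ncard_pair (ne_of_apply_ne c hxy), hcard,
    Nat.add_sub_cancel]

lemma HasParallelClasses.linearIndependent_col [Finite κ] {B : Matrix κ (Fin 2) F} {c : κ → C}
    (h : HasParallelClasses F c B.row) {x y : κ} (hxy : c x ≠ c y) : LinearIndependent F B.col := by
  have hne : x ≠ y := ne_of_apply_ne c hxy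
  exact linearIndependent_col_of_linearIndepOn_row (s := {x, y})
    ((LinearIndepOn.pair_iff _ hne).2 (LinearIndependent.pair_iff.1 ((h x y).2 hxy)))
    (Set.ncard_pair hne).ge

theorem card_coparallel_families_mul [Fintype κ] [Finite F] (hcard : Fintype.card κ = n + 2)
    {c : κ → C} (hc : ∃ x y, c x ≠ c y) :
    Nat.card {w : κ → Fin n → F // HasCoparallelClasses F c w} * Nat.card (GL (Fin 2) F) =
      Nat.card {g : κ → Fin 2 → F // HasParallelClasses F c g} * Nat.card (GL (Fin n) F) := by
  obtain ⟨x, y, hxy⟩ := hc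
  refine card_mul_eq_card_mul_of_rel
    (fun (A : Matrix κ (Fin n) F) (B : Matrix κ (Fin 2) F) => IsGaleDual A B)
    (fun A B h => h.hasCoparallelClasses_iff hcard c) (fun A hA => ?_) fun B hB => ?_
  · exact card_isGaleDual (HasCoparallelClasses.linearIndependent_col hA hcard hxy) hcard
  · rw [← card_isGaleDual (HasParallelClasses.linearIndependent_col hB hxy)
      (hcard.trans (add_comm n 2))]
    exact Nat.card_congr (Equiv.subtypeEquivRight fun A => ⟨IsGaleDual.symm, IsGaleDual.symm⟩)

lemma card_fun_ne_iff_ne {X : Type*} [Finite X] [Fintype C] {c : κ → C}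
    (hc : Function.Surjective c) :
    Nat.card {τ : κ → X // ∀ x y, τ x ≠ τ y ↔ c x ≠ c y} =
      (Nat.card X).descFactorial (Fintype.card C) := by
  classical
  have := Fintype.ofFinite X
  let factor : (C ↪ X) → {τ : κ → X // ∀ x y, τ x ≠ τ y ↔ c x ≠ c y} :=
    fun f => ⟨f ∘ c, fun x y => f.injective.ne_iff⟩
  have hfactor : Function.Bijective factor := by
    refine ⟨fun f f' h => ?_, fun τ => ?_⟩
    · exact DFunLike.coe_injective (hc.injective_comp_right (congrArg Subtype.val h))
    · have hτ (x) : τ.1 (Function.surjInv hc (c x)) = τ.1 x :=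
        not_ne_iff.1 fun h => (τ.2 _ _).1 h (Function.surjInv_eq hc _)
      refine ⟨⟨τ.1 ∘ Function.surjInv hc, fun a b h => ?_⟩, Subtype.ext (funext hτ)⟩
      by_contra hab
      refine (τ.2 _ _).2 ?_ h
      simpa only [Function.surjInv_eq hc] using hab
  rw [← Nat.card_congr (Equiv.ofBijective factor hfactor), Nat.card_eq_fintype_card,
    Fintype.card_embedding_eq, Nat.card_eq_fintype_card]

lemma hasCoparallelClasses_units_smul {V : Type*} [AddCommGroup V] [Module F V] {c : κ → C}
    (u : κ → Fˣ) (w : κ → V) :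
    HasCoparallelClasses F c (fun x => u x • w x) ↔ HasCoparallelClasses F c w :=
  forall₂_congr fun x y => iff_congr
    (LinearIndependent.units_smul_iff (fun z : ({x, y}ᶜ : Set κ) => w z) fun z => u z) Iff.rfl

lemma hasParallelClasses_units_smul {V : Type*} [AddCommGroup V] [Module F V] {c : κ → C}
    (u : κ → Fˣ) (g : κ → V) :
    HasParallelClasses F c (fun x => u x • g x) ↔ HasParallelClasses F c g := by
  refine forall₂_congr fun x y => iff_congr ?_ Iff.rfl
  rw [← LinearIndependent.units_smul_iff ![g x, g y] ![u x, u y]]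
  have hsmul : ![u x • g x, u y • g y] = ![u x, u y] • ![g x, g y] := by
    funext i; fin_cases i <;> rfl
  rw [hsmul]

lemma card_parallel_families [Fintype κ] [Fintype F] [Fintype C] {c : κ → C}
    (hc : Function.Surjective c) (hne : ∀ x, ∃ y, c x ≠ c y) :
    Nat.card {g : κ → Fin 2 → F // HasParallelClasses F c g} =
      (Fintype.card F + 1).descFactorial (Fintype.card C) * Nat.card Fˣ ^ Fintype.card κ := by
  rw [card_families_eq_card_points_mul _ ?_ hasParallelClasses_units_smul]
  · simp only [HasParallelClasses, Projectivization.linearIndependent_pair_iff_ne]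
    rw [card_fun_ne_iff_ne hc, Projectivization.card_of_finrank_two F (Fin 2 → F) (by simp),
      Nat.card_eq_fintype_card (α := F)]
  · intro g hg x
    obtain ⟨y, hxy⟩ := hne x
    exact ((hg x y).2 hxy).ne_zero 0

theorem card_coparallel_points_mul [Fintype κ] [Fintype F] [Fintype C]
    (hcard : Fintype.card κ = n + 2) {c : κ → C} (hsurj : Function.Surjective c)
    (hc : ∀ x, ∃ y z, y ≠ x ∧ z ≠ x ∧ c y ≠ c z) :
    Nat.card {σ : κ → ℙ F (Fin n → F) // HasCoparallelClasses F c fun x => (σ x).rep} *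
        Nat.card (GL (Fin 2) F) =
      (Fintype.card F + 1).descFactorial (Fintype.card C) * Nat.card (GL (Fin n) F) := by
  have : Nonempty κ := Fintype.card_pos_iff.1 (by lia)
  have hne (x : κ) : ∃ y, c x ≠ c y := by
    obtain ⟨y, z, -, -, hyz⟩ := hc x
    by_contra! h
    exact hyz ((h y).symm.trans (h z))
  have hpos : 0 < Nat.card Fˣ ^ Fintype.card κ := pow_pos Nat.card_pos _
  refine Nat.eq_of_mul_eq_mul_right hpos ?_
  have hdual := card_coparallel_families_mul (F := F) hcard ⟨_, hne (Classical.arbitrary κ)⟩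
  rw [card_families_eq_card_points_mul _ (fun w hw => hw.ne_zero hc)
    hasCoparallelClasses_units_smul, card_parallel_families hsurj hne] at hdual
  linarith

lemma hasCoparallelClasses_iff_forall_ne [Fintype κ] [DecidableEq κ]
    (hcard : Fintype.card κ = n + 2) {c : κ → C} {w : κ → Fin n → F} :
    HasCoparallelClasses F c w ↔ ∀ x y, x ≠ y →
      (LinearIndepOn F w (({x, y}ᶜ : Finset κ) : Set κ) ↔ c x ≠ c y) := by
  simp only [Finset.coe_compl, Finset.coe_pair]
  refine ⟨fun h x y _ => h x y, fun h x y => ?_⟩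
  by_cases hxy : x = y
  · subst hxy
    refine iff_of_false (fun hli => ?_) (by simp)
    have hle := hli.fintype_card_le_finrank
    rw [Module.finrank_fin_fun, ← Nat.card_eq_fintype_card, Nat.card_coe_set_eq, Set.ncard_compl,
      Set.pair_eq_singleton, Set.ncard_singleton, Nat.card_eq_fintype_card, hcard] at hle
    lia
  · exact h x y hxy

lemma HasCoparallelClasses.injective {V : Type*} [AddCommGroup V] [Module F V] {c : κ → C}
    {w : κ → V} (h : HasCoparallelClasses F c w)
    (hc : ∀ i j, i ≠ j → ∃ x y, c x ≠ c y ∧ i ∉ ({x, y} : Set κ) ∧ j ∉ ({x, y} : Set κ)) :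
    Function.Injective w := by
  intro i j hij
  by_contra hne
  obtain ⟨x, y, hxy, hi, hj⟩ := hc i j hne
  exact hne (((h x y).2 hxy).injOn hi hj hij)

end Classes

section Dictionary

variable {F : Type} [Field F] {κ : Type*} [DecidableEq κ] {σ : κ → ℙ F (Fin 4 → F)}

lemma collinear3_iff_not_linearIndepOn {a b c : κ} (hab : a ≠ b) (hac : a ≠ c) (hbc : b ≠ c) :
    Collinear3 F (σ a) (σ b) (σ c) ↔
      ¬ LinearIndepOn F (fun i => (σ i).rep) (({a, b, c} : Finset κ) : Set κ) := by
  rw [linearIndepOn_rep_iff_card_le_finrank, Finset.card_eq_three.2 ⟨a, b, c, hab, hac, hbc, rfl⟩]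
  have hsup : ⨆ i ∈ ({a, b, c} : Finset κ), (σ i).submodule =
      (σ a).submodule ⊔ (σ b).submodule ⊔ (σ c).submodule := by
    simp only [Finset.iSup_insert, Finset.iSup_singleton, sup_assoc]
  rw [hsup, not_le, Collinear3, Nat.lt_succ_iff]

lemma coplanar4_iff_not_linearIndepOn {a b c d : κ} (hab : a ≠ b) (hac : a ≠ c) (had : a ≠ d)
    (hbc : b ≠ c) (hbd : b ≠ d) (hcd : c ≠ d) :
    Coplanar4 F (σ a) (σ b) (σ c) (σ d) ↔
      ¬ LinearIndepOn F (fun i => (σ i).rep) (({a, b, c, d} : Finset κ) : Set κ) := by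
  rw [linearIndepOn_rep_iff_card_le_finrank,
    Finset.card_eq_four.2 ⟨a, b, c, d, hab, hac, had, hbc, hbd, hcd, rfl⟩]
  have hsup : ⨆ i ∈ ({a, b, c, d} : Finset κ), (σ i).submodule =
      (σ a).submodule ⊔ (σ b).submodule ⊔ (σ c).submodule ⊔ (σ d).submodule := by
    simp only [Finset.iSup_insert, Finset.iSup_singleton, sup_assoc]
  rw [hsup, not_le, Coplanar4, Nat.lt_succ_iff]

lemma forall_distinct_four_iff_forall_compl_pair [Fintype κ] (hκ : Fintype.card κ = 6)
    (P : Finset κ → Prop) :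
    (∀ a b c d : κ, a ≠ b → a ≠ c → a ≠ d → b ≠ c → b ≠ d → c ≠ d → P {a, b, c, d}) ↔
      ∀ x y : κ, x ≠ y → P {x, y}ᶜ := by
  constructor
  · intro h x y hxy
    have hcard : ({x, y}ᶜ : Finset κ).card = 4 := by
      rw [Finset.card_compl, hκ, Finset.card_pair hxy]
    obtain ⟨a, b, c, d, hab, hac, had, hbc, hbd, hcd, heq⟩ := Finset.card_eq_four.1 hcard
    exact heq ▸ h a b c d hab hac had hbc hbd hcd
  · intro h a b c d hab hac had hbc hbd hcd
    have hcard : ({a, b, c, d}ᶜ : Finset κ).card = 2 := by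
      rw [Finset.card_compl, hκ,
        Finset.card_eq_four.2 ⟨a, b, c, d, hab, hac, had, hbc, hbd, hcd, rfl⟩]
    obtain ⟨x, y, hxy, heq⟩ := Finset.card_eq_two.1 hcard
    exact compl_eq_comm.1 heq ▸ h x y hxy

lemma hasCoparallelClasses_rep_iff_coplanar4 [Fintype κ] (hκ : Fintype.card κ = 6) {C : Type*}
    {l : κ → C} {Q : Finset κ → Prop} (hQ : ∀ x y, x ≠ y → (Q {x, y}ᶜ ↔ l x = l y)) :
    HasCoparallelClasses F l (fun i => (σ i).rep) ↔
      ∀ a b c d : κ, a ≠ b → a ≠ c → a ≠ d → b ≠ c → b ≠ d → c ≠ d →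
        (Coplanar4 F (σ a) (σ b) (σ c) (σ d) ↔ Q {a, b, c, d}) := by
  calc HasCoparallelClasses F l (fun i => (σ i).rep)
      ↔ ∀ x y : κ, x ≠ y →
          (¬ LinearIndepOn F (fun i => (σ i).rep) (({x, y}ᶜ : Finset κ) : Set κ) ↔
            Q {x, y}ᶜ) := by
        rw [hasCoparallelClasses_iff_forall_ne hκ]
        refine forall₃_congr fun x y hxy => ?_
        rw [hQ x y hxy, not_iff_comm]
        exact iff_comm
    _ ↔ ∀ a b c d : κ, a ≠ b → a ≠ c → a ≠ d → b ≠ c → b ≠ d → c ≠ d →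
          (¬ LinearIndepOn F (fun i => (σ i).rep) (({a, b, c, d} : Finset κ) : Set κ) ↔
            Q {a, b, c, d}) :=
        (forall_distinct_four_iff_forall_compl_pair hκ fun s =>
          ¬ LinearIndepOn F (fun i => (σ i).rep) (s : Set κ) ↔ Q s).symm
    _ ↔ _ := by
        simp +contextual only [coplanar4_iff_not_linearIndepOn, ne_eq, not_false_eq_true]

end Dictionary

/-- The line `{0, 1, 2}` or `{3, 4, 5}` of the hyperfiguration through a given point. Its planes
are the complements of the pairs of points on a common line. -/
def hyperfigurationLine : Fin 6 → Fin 2 :=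
  ![0, 0, 0, 1, 1, 1]

lemma not_linearIndepOn_triple_iff_subset_line {F V : Type*} [Field F] [AddCommGroup V]
    [Module F V] {w : Fin 6 → V} (h : HasCoparallelClasses F hyperfigurationLine w)
    {s : Finset (Fin 6)} (hs : s.card = 3) :
    ¬ LinearIndepOn F w (s : Set (Fin 6)) ↔ s ⊆ {0, 1, 2} ∨ s ⊆ {3, 4, 5} := by
  have hpair (x y : Fin 6) : LinearIndepOn F w (({x, y}ᶜ : Finset (Fin 6)) : Set (Fin 6)) ↔
      hyperfigurationLine x ≠ hyperfigurationLine y := by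
    simpa only [Finset.coe_compl, Finset.coe_pair] using h x y
  constructor
  · intro hdep
    by_contra hline
    obtain ⟨x, y, hxy, hsub⟩ : ∃ x y, hyperfigurationLine x ≠ hyperfigurationLine y ∧
        s ⊆ {x, y}ᶜ := by
      clear hdep
      decide +revert
    exact hdep (((hpair x y).2 hxy).mono (Finset.coe_subset.2 hsub))
  · intro hline hindep
    obtain ⟨j, hj, hins⟩ := exists_notMem_linearIndepOn_insert hindep ((hpair 0 3).2 (by decide))
      (by rw [hs]; decide)
    obtain ⟨x, y, hxy, hcompl⟩ : ∃ x y, hyperfigurationLine x = hyperfigurationLine y ∧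
        insert j s = {x, y}ᶜ := by
      clear hindep hins
      decide +revert
    rw [← Finset.coe_insert, hcompl, hpair] at hins
    exact hins hxy

section Configurations

variable {F : Type} [Field F] {σ : Fin 6 → ℙ F (Fin 4 → F)}

theorem isArc4_iff_hasCoparallelClasses :
    IsArc4 F σ ↔ HasCoparallelClasses F id fun i => (σ i).rep := by
  have hfour := hasCoparallelClasses_rep_iff_coplanar4 (F := F) (σ := σ) (Fintype.card_fin 6)
    (l := id) (Q := fun _ => False) (by decide)
  simp only [iff_false] at hfour
  refine ⟨fun h => hfour.2 h.2, fun h => ⟨fun i j hij => ?_, hfour.1 h⟩⟩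
  exact h.injective (by decide) (congrArg Projectivization.rep hij)

theorem isHyp6Real_iff_hasCoparallelClasses :
    IsHyp6Real F σ ↔ HasCoparallelClasses F hyperfigurationLine fun i => (σ i).rep := by
  have hfour := hasCoparallelClasses_rep_iff_coplanar4 (F := F) (σ := σ) (Fintype.card_fin 6)
    (l := hyperfigurationLine) (Q := (· ∈ ({{0, 1, 2, 3}, {0, 1, 2, 4}, {0, 1, 2, 5}, {0, 3, 4, 5},
      {1, 3, 4, 5}, {2, 3, 4, 5}} : Finset (Finset (Fin 6))))) (by decide)
  refine ⟨fun h => hfour.2 h.2.2, fun h => ⟨fun i j hij => ?_, fun a b c hab hac hbc => ?_,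
    hfour.1 h⟩⟩
  · exact h.injective (by decide) (congrArg Projectivization.rep hij)
  · rw [collinear3_iff_not_linearIndepOn hab hac hbc]
    exact not_linearIndepOn_triple_iff_subset_line h
      (Finset.card_eq_three.2 ⟨a, b, c, hab, hac, hbc, rfl⟩)

end Configurations

section GeneralLinearGroup

variable (F : Type*) [Field F]

lemma cast_card_GL [Fintype F] (n : ℕ) :
    (Nat.card (GL (Fin n) F) : ℤ) =
      ∏ i : Fin n, ((Fintype.card F : ℤ) ^ n - (Fintype.card F : ℤ) ^ (i : ℕ)) := by
  rw [Matrix.card_GL_field, Nat.cast_prod]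
  refine Finset.prod_congr rfl fun i _ => ?_
  rw [Nat.cast_sub (Nat.pow_le_pow_right Fintype.card_pos i.is_le'), Nat.cast_pow, Nat.cast_pow]

lemma cast_card_GL_ne_zero [Finite F] (n : ℕ) : (Nat.card (GL (Fin n) F) : ℤ) ≠ 0 :=
  Nat.cast_ne_zero.2 Nat.card_pos.ne'

lemma cast_card_GL_four [Fintype F] :
    (Nat.card (GL (Fin 4) F) : ℤ) =
      (Fintype.card F : ℤ) ^ 5 * ((Fintype.card F : ℤ) ^ 4 - 1) *
        ((Fintype.card F : ℤ) ^ 3 - 1) * Nat.card (GL (Fin 2) F) := by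
  simp only [cast_card_GL, Fin.prod_univ_succ, Fin.prod_univ_zero, Fin.val_zero, Fin.val_succ]
  ring

end GeneralLinearGroup

section Counting

variable (F : Type) [Field F] [Fintype F]

lemma card_isHyp6Real_mul_card_GL :
    Nat.card {σ : Fin 6 → ℙ F (Fin 4 → F) // IsHyp6Real F σ} * Nat.card (GL (Fin 2) F) =
      (Fintype.card F + 1).descFactorial 2 * Nat.card (GL (Fin 4) F) := by
  simp only [isHyp6Real_iff_hasCoparallelClasses]
  exact card_coparallel_points_mul (Fintype.card_fin 6) (by decide) (by decide)

lemma card_isArc4_mul_card_GL :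
    Nat.card {σ : Fin 6 → ℙ F (Fin 4 → F) // IsArc4 F σ} * Nat.card (GL (Fin 2) F) =
      (Fintype.card F + 1).descFactorial 6 * Nat.card (GL (Fin 4) F) := by
  simp only [isArc4_iff_hasCoparallelClasses]
  exact card_coparallel_points_mul (Fintype.card_fin 6) Function.surjective_id (by decide)

theorem card_isArc4_eq_card_isHyp6Real_mul :
    (Nat.card {σ : Fin 6 → ℙ F (Fin 4 → F) // IsArc4 F σ} : ℤ) =
      Nat.card {σ : Fin 6 → ℙ F (Fin 4 → F) // IsHyp6Real F σ} *
        (((Fintype.card F : ℤ) - 1) * ((Fintype.card F : ℤ) - 2) * ((Fintype.card F : ℤ) - 3) *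
          ((Fintype.card F : ℤ) - 4)) := by
  have hdesc (k : ℕ) : ((Fintype.card F + 1).descFactorial k : ℤ) =
      ∏ j ∈ Finset.range k, ((Fintype.card F : ℤ) + 1 - j) := by
    rw [← Nat.cast_succ, ← descPochhammer_eval_eq_prod_range, descPochhammer_eval_eq_descFactorial]
  have hdesc_six : ((Fintype.card F + 1).descFactorial 6 : ℤ) =
      (Fintype.card F + 1).descFactorial 2 * (((Fintype.card F : ℤ) - 1) *
        ((Fintype.card F : ℤ) - 2) * ((Fintype.card F : ℤ) - 3) * ((Fintype.card F : ℤ) - 4)) := by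
    simp only [hdesc, Finset.prod_range_succ, Finset.prod_range_zero]
    push_cast
    ring
  have harc : (Nat.card {σ : Fin 6 → ℙ F (Fin 4 → F) // IsArc4 F σ} : ℤ) *
      Nat.card (GL (Fin 2) F) = (Fintype.card F + 1).descFactorial 6 * Nat.card (GL (Fin 4) F) :=
    mod_cast card_isArc4_mul_card_GL F
  have hhyp : (Nat.card {σ : Fin 6 → ℙ F (Fin 4 → F) // IsHyp6Real F σ} : ℤ) *
      Nat.card (GL (Fin 2) F) = (Fintype.card F + 1).descFactorial 2 * Nat.card (GL (Fin 4) F) :=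
    mod_cast card_isHyp6Real_mul_card_GL F
  refine mul_right_cancel₀ (cast_card_GL_ne_zero F 2) ?_
  rw [harc, hdesc_six, mul_right_comm, ← hhyp, mul_right_comm]

theorem card_isHyp6Real :
    (Nat.card {σ : Fin 6 → ℙ F (Fin 4 → F) // IsHyp6Real F σ} : ℤ) =
      (Fintype.card F : ℤ) ^ 6 * ((Fintype.card F : ℤ) ^ 4 - 1) * ((Fintype.card F : ℤ) ^ 3 - 1) *
        ((Fintype.card F : ℤ) + 1) := by
  refine mul_right_cancel₀ (cast_card_GL_ne_zero F 2) ?_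
  calc (Nat.card {σ : Fin 6 → ℙ F (Fin 4 → F) // IsHyp6Real F σ} : ℤ) * Nat.card (GL (Fin 2) F)
      = ((Fintype.card F + 1).descFactorial 2 : ℕ) * Nat.card (GL (Fin 4) F) :=
        mod_cast card_isHyp6Real_mul_card_GL F
    _ = _ := by
        simp only [cast_card_GL_four, Nat.descFactorial_succ, Nat.descFactorial_zero]
        push_cast
        ring

end Counting

/-- `C_{6,4}(q) = q^18 - 9q^17 + 25q^16 - 16q^15 - 58q^14 - 32q^13 - 10q^12 + 82q^11
+ 73q^10 + 41q^9 - 15q^8 - 66q^7 - 16q^6 + 40·A_6(4,q)`. -/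
theorem C64_via_A6 (F : Type) [Field F] [Fintype F] (q : ℕ) (hq : q = Fintype.card F) :
    (Nat.card {σ : Fin 6 → ℙ F (Fin 4 → F) // IsArc4 F σ} : ℤ) =
      (q : ℤ)^18 - 9*(q : ℤ)^17 + 25*(q : ℤ)^16 - 16*(q : ℤ)^15 - 58*(q : ℤ)^14
        - 32*(q : ℤ)^13 - 10*(q : ℤ)^12 + 82*(q : ℤ)^11 + 73*(q : ℤ)^10 + 41*(q : ℤ)^9
        - 15*(q : ℤ)^8 - 66*(q : ℤ)^7 - 16*(q : ℤ)^6
        + 40 * (Nat.card {σ : Fin 6 → ℙ F (Fin 4 → F) // IsHyp6Real F σ} : ℤ) := by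
  rw [card_isArc4_eq_card_isHyp6Real_mul, card_isHyp6Real, ← hq]
  ring
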